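/- Let ρ be a positive-definite density operator on a chain H = H_1 ⊗ … ⊗ H_n with the nearest-neighbor neighborhood structure N = {N_j = {j, j+1} : j = 1, …, n−1}, and suppose ρ is FFQLS relative to N. If for some l the minimal modular-invariant distorted algebra generated by the neighborhood Schmidt span is the full neighborhood algebra, F_{ρ_{l,l+1}}(Σ_{l,l+1}(ρ)) = B(H_l ⊗ H_{l+1}), then ρ factorizes across the cut between sites l and l+1: ρ = ρ_{1…l} ⊗ ρ_{l+1…n} for some density operators ρ_{1…l} on H_1 ⊗ … ⊗ H_l and ρ_{l+1…n} on H_{l+1} ⊗ … ⊗ H_n. -/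

import Mathlib

namespace QDS

open Matrix
open scoped ComplexOrder

/-! ### Basic single-system notions -/

section Single

variable {ι : Type*} [Fintype ι] [DecidableEq ι]

open Classical in
/-- The (unique) positive-semidefinite square root of a positive-semidefinite matrix
(junk value `0` if no positive-semidefinite square root exists). -/
noncomputable def msqrt (A : Matrix ι ι ℂ) : Matrix ι ι ℂ :=
  if h : ∃ B : Matrix ι ι ℂ, B.PosSemidef ∧ B * B = A then h.choose else 0

open Classical in
/-- The Moore–Penrose pseudoinverse of a matrix, defined via its characterizing
properties (it always exists and is unique for complex matrices). -/
noncomputable def mpinv (A : Matrix ι ι ℂ) : Matrix ι ι ℂ :=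
  if h : ∃ B : Matrix ι ι ℂ,
      A * B * A = A ∧ B * A * B = B ∧ (A * B)ᴴ = A * B ∧ (B * A)ᴴ = B * A
  then h.choose else 0

/-- A density operator: positive semidefinite with unit trace. -/
def IsDensity (ρ : Matrix ι ι ℂ) : Prop := ρ.PosSemidef ∧ ρ.trace = 1

/-- A CPTP map in Kraus (operator-sum) form. -/
def IsCPTP (T : Matrix ι ι ℂ →ₗ[ℂ] Matrix ι ι ℂ) : Prop :=
  ∃ (m : ℕ) (M : Fin m → Matrix ι ι ℂ),
    (∀ X, T X = ∑ k, M k * X * (M k)ᴴ) ∧ (∑ k, (M k)ᴴ * M k) = 1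

/-- The Lindblad (QDS) generator with Hamiltonian `Hm` and noise operators `Lk`:
`L(X) = -i[Hm, X] + Σₖ (Lₖ X Lₖ† - ½{Lₖ†Lₖ, X})`. -/
noncomputable def lindbladMap (Hm : Matrix ι ι ℂ) {m : ℕ} (Lk : Fin m → Matrix ι ι ℂ) :
    Matrix ι ι ℂ →ₗ[ℂ] Matrix ι ι ℂ :=
  (-Complex.I) • (LinearMap.mulLeft ℂ Hm - LinearMap.mulRight ℂ Hm) +
    ∑ k, ((LinearMap.mulRight ℂ (Lk k)ᴴ).comp (LinearMap.mulLeft ℂ (Lk k)) -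
      ((1 : ℂ)/2) • (LinearMap.mulLeft ℂ ((Lk k)ᴴ * Lk k) +
        LinearMap.mulRight ℂ ((Lk k)ᴴ * Lk k)))

/-- `L` is a QDS (Lindblad) generator. -/
def IsLindblad (L : Matrix ι ι ℂ →ₗ[ℂ] Matrix ι ι ℂ) : Prop :=
  ∃ Hm : Matrix ι ι ℂ, Hm.IsHermitian ∧
    ∃ (m : ℕ) (Lk : Fin m → Matrix ι ι ℂ), L = lindbladMap Hm Lk

/-- `Ld` is the Hilbert–Schmidt adjoint of `L` (w.r.t. `⟨X,Y⟩ = Tr(X†Y)`). -/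
def IsHSAdjoint (L Ld : Matrix ι ι ℂ →ₗ[ℂ] Matrix ι ι ℂ) : Prop :=
  ∀ X Y : Matrix ι ι ℂ, ((Ld X)ᴴ * Y).trace = (Xᴴ * L Y).trace

/-- The fixed-point set of a (super)operator. -/
def fixSet (T : Matrix ι ι ℂ →ₗ[ℂ] Matrix ι ι ℂ) : Set (Matrix ι ι ℂ) := {X | T X = X}

/-- The support of an operator: the orthogonal complement of its kernel,
equivalently the range of its adjoint. -/
noncomputable def msupp (A : Matrix ι ι ℂ) : Submodule ℂ (ι → ℂ) := LinearMap.range (Aᴴ).mulVecLin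

/-- The support of a set of operators: the span of the union of their supports. -/
noncomputable def suppSet (W : Set (Matrix ι ι ℂ)) : Submodule ℂ (ι → ℂ) := ⨆ O ∈ W, msupp O

/-- The minimal modular-invariant distorted algebra generated by `W` relative to `ρ`:
the smallest subspace containing `W` that is closed under the adjoint, under the
`ρ`-modified product `(X,Y) ↦ X ρ⁻ Y`, and under the modular map `X ↦ ρ^{1/2} X ρ⁻^{1/2}`. -/
noncomputable def Fdist (ρ : Matrix ι ι ℂ) (W : Set (Matrix ι ι ℂ)) :
    Submodule ℂ (Matrix ι ι ℂ) :=
  sInf {S : Submodule ℂ (Matrix ι ι ℂ) | W ⊆ S ∧ (∀ X ∈ S, Xᴴ ∈ S) ∧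
    (∀ X ∈ S, ∀ Y ∈ S, X * mpinv ρ * Y ∈ S) ∧
    (∀ X ∈ S, msqrt ρ * X * mpinv (msqrt ρ) ∈ S)}

/-- `ρ` is globally asymptotically stable for the generator `L`: it is invariant and every
solution of `ẋ = L(x)` starting at a density operator converges to `ρ` as `t → ∞`. -/
def IsGAS (L : Matrix ι ι ℂ →ₗ[ℂ] Matrix ι ι ℂ) (ρ : Matrix ι ι ℂ) : Prop :=
  L ρ = 0 ∧
  ∀ σ : Matrix ι ι ℂ, IsDensity σ →
    ∀ x : ℝ → Matrix ι ι ℂ, x 0 = σ →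
      (∀ t : ℝ, ∀ i j, HasDerivAt (fun s : ℝ => x s i j) (L (x t) i j) t) →
      ∀ i j, Filter.Tendsto (fun t : ℝ => x t i j) Filter.atTop (nhds (ρ i j))

end Single

/-! ### Bipartite notions -/

section Bipartite

variable {α β : Type*} [Fintype α] [Fintype β] [DecidableEq α] [DecidableEq β]

/-- Partial trace over the second factor. -/
noncomputable def ptraceB (ρ : Matrix (α × β) (α × β) ℂ) : Matrix α α ℂ :=
  Matrix.of fun i j => ∑ k : β, ρ (i, k) (j, k)

/-- The operator Schmidt span of `ρ` on the first factor:
`{Tr_B[(I ⊗ B) ρ] : B ∈ B(H_B)}`. -/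
noncomputable def opSchmidtA (ρ : Matrix (α × β) (α × β) ℂ) : Set (Matrix α α ℂ) :=
  {A | ∃ B : Matrix β β ℂ,
    A = ptraceB ((Matrix.kroneckerMap (· * ·) (1 : Matrix α α ℂ) B) * ρ)}

/-- The (vector) Schmidt span of `v ∈ V_A ⊗ V_B` relative to `V_A`: the image of `v`
under partial inner products with vectors of `V_B`. -/
def vSchmidtA (v : α × β → ℂ) : Set (α → ℂ) :=
  {w | ∃ b : β → ℂ, w = fun a => ∑ j, (starRingEnd ℂ) (b j) * v (a, j)}

/-- `Σ_A(v) ⊗ V_B` as a subspace of `V_A ⊗ V_B`. -/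
noncomputable def extVSchmidtA (v : α × β → ℂ) : Submodule ℂ (α × β → ℂ) :=
  Submodule.span ℂ {v' | ∃ w ∈ vSchmidtA v, ∃ b : β → ℂ, v' = fun p => w p.1 * b p.2}

end Bipartite

/-! ### Multipartite notions -/

section Multipartite

variable {n : ℕ} {d : Fin n → Type*} [∀ a, Fintype (d a)] [∀ a, DecidableEq (d a)]

/-- Index type of the neighborhood factor `H_N`. -/
abbrev nbhdIdx (d : Fin n → Type*) (N : Finset (Fin n)) : Type _ :=
  ∀ a : {x : Fin n // x ∈ N}, d a

/-- Index type of the complementary factor `H_N̄`. -/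
abbrev nbhdCoIdx (d : Fin n → Type*) (N : Finset (Fin n)) : Type _ :=
  ∀ a : {x : Fin n // ¬ x ∈ N}, d a

/-- The factorization `H ≃ H_N ⊗ H_N̄` at the level of index types. -/
def splitEquiv (d : Fin n → Type*) (N : Finset (Fin n)) :
    (∀ a, d a) ≃ nbhdIdx d N × nbhdCoIdx d N :=
  Equiv.piEquivPiSubtypeProd (fun x => x ∈ N) d

variable (d)

/-- The operator `A ⊗ B` on `H = H_N ⊗ H_N̄`, viewed as an operator on `H`. -/
noncomputable def splitLift (N : Finset (Fin n))
    (A : Matrix (nbhdIdx d N) (nbhdIdx d N) ℂ)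
    (B : Matrix (nbhdCoIdx d N) (nbhdCoIdx d N) ℂ) :
    Matrix (∀ a, d a) (∀ a, d a) ℂ :=
  (Matrix.kroneckerMap (· * ·) A B).submatrix (splitEquiv d N) (splitEquiv d N)

/-- The neighborhood operator `A ⊗ I_N̄` on `H`. -/
noncomputable def nbhdLift (N : Finset (Fin n))
    (A : Matrix (nbhdIdx d N) (nbhdIdx d N) ℂ) : Matrix (∀ a, d a) (∀ a, d a) ℂ :=
  splitLift d N A 1

/-- The operator `I_N ⊗ B` on `H`. -/
noncomputable def coLift (N : Finset (Fin n))
    (B : Matrix (nbhdCoIdx d N) (nbhdCoIdx d N) ℂ) : Matrix (∀ a, d a) (∀ a, d a) ℂ :=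
  splitLift d N 1 B

/-- The reduced state `ρ_N = Tr_N̄(ρ)` on the neighborhood `N`. -/
noncomputable def nbhdPtrace (N : Finset (Fin n)) (ρ : Matrix (∀ a, d a) (∀ a, d a) ℂ) :
    Matrix (nbhdIdx d N) (nbhdIdx d N) ℂ :=
  Matrix.of fun i j => ∑ k : nbhdCoIdx d N,
    ρ ((splitEquiv d N).symm (i, k)) ((splitEquiv d N).symm (j, k))

/-- The operator Schmidt span of `ρ` on the neighborhood `N`:
`Σ_N(ρ) = {Tr_N̄[(I_N ⊗ B) ρ] : B}`. -/
noncomputable def nbhdSchmidt (N : Finset (Fin n)) (ρ : Matrix (∀ a, d a) (∀ a, d a) ℂ) :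
    Set (Matrix (nbhdIdx d N) (nbhdIdx d N) ℂ) :=
  {A | ∃ B : Matrix (nbhdCoIdx d N) (nbhdCoIdx d N) ℂ,
    A = nbhdPtrace d N (coLift d N B * ρ)}

/-- The extended minimal modular-invariant distorted algebra
`F_{ρ_N}(Σ_N(ρ)) ⊗ B(H_N̄)` as a subspace of `B(H)`. -/
noncomputable def extF (N : Finset (Fin n)) (ρ : Matrix (∀ a, d a) (∀ a, d a) ℂ) :
    Submodule ℂ (Matrix (∀ a, d a) (∀ a, d a) ℂ) :=
  Submodule.span ℂ {X | ∃ A ∈ Fdist (nbhdPtrace d N ρ) (nbhdSchmidt d N ρ),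
    ∃ B : Matrix (nbhdCoIdx d N) (nbhdCoIdx d N) ℂ, X = splitLift d N A B}

/-- A neighborhood QDS generator for `N`: a Lindblad generator whose Hamiltonian and
noise operators all act as `X_N ⊗ I_N̄`. -/
def IsNbhdGen (N : Finset (Fin n))
    (L : Matrix (∀ a, d a) (∀ a, d a) ℂ →ₗ[ℂ] Matrix (∀ a, d a) (∀ a, d a) ℂ) : Prop :=
  ∃ HN : Matrix (nbhdIdx d N) (nbhdIdx d N) ℂ, HN.IsHermitian ∧
    ∃ (m : ℕ) (Lk : Fin m → Matrix (nbhdIdx d N) (nbhdIdx d N) ℂ),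
      L = lindbladMap (nbhdLift d N HN) fun k => nbhdLift d N (Lk k)

/-- A purely dissipative neighborhood generator for `N` (zero Hamiltonian in some
Lindblad representation). -/
def IsDissipNbhdGen (N : Finset (Fin n))
    (L : Matrix (∀ a, d a) (∀ a, d a) ℂ →ₗ[ℂ] Matrix (∀ a, d a) (∀ a, d a) ℂ) : Prop :=
  ∃ (m : ℕ) (Lk : Fin m → Matrix (nbhdIdx d N) (nbhdIdx d N) ℂ),
    L = lindbladMap 0 fun k => nbhdLift d N (Lk k)

/-- The family of neighborhood generators `Lj` is frustration free: every invariant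
state of the sum is invariant for each component. -/
def IsFFFamily {M : ℕ}
    (Lj : Fin M → (Matrix (∀ a, d a) (∀ a, d a) ℂ →ₗ[ℂ] Matrix (∀ a, d a) (∀ a, d a) ℂ)) :
    Prop :=
  ∀ ρ : Matrix (∀ a, d a) (∀ a, d a) ℂ, IsDensity ρ → (∑ j, Lj j) ρ = 0 → ∀ j, Lj j ρ = 0

/-- `ρ` is frustration-free quasi-locally stabilizable relative to the neighborhood
structure `Nb`. -/
def IsFFQLS {M : ℕ} (Nb : Fin M → Finset (Fin n))
    (ρ : Matrix (∀ a, d a) (∀ a, d a) ℂ) : Prop :=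
  ∃ Lj : Fin M → (Matrix (∀ a, d a) (∀ a, d a) ℂ →ₗ[ℂ] Matrix (∀ a, d a) (∀ a, d a) ℂ),
    (∀ j, IsNbhdGen d (Nb j) (Lj j)) ∧ IsFFFamily d Lj ∧ IsGAS (∑ j, Lj j) ρ

/-- A pure state `|ψ⟩⟨ψ|` is dissipatively quasi-locally stabilizable relative to `Nb`:
it is GAS for a QL generator whose components have zero Hamiltonian and neighborhood
noise operators annihilating `ψ`. -/
def IsDQLS {M : ℕ} (Nb : Fin M → Finset (Fin n)) (ψ : (∀ a, d a) → ℂ) : Prop :=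
  ∃ Lj : Fin M → (Matrix (∀ a, d a) (∀ a, d a) ℂ →ₗ[ℂ] Matrix (∀ a, d a) (∀ a, d a) ℂ),
    (∀ j, ∃ (m : ℕ) (Dk : Fin m → Matrix (nbhdIdx d (Nb j)) (nbhdIdx d (Nb j)) ℂ),
      Lj j = lindbladMap 0 (fun k => nbhdLift d (Nb j) (Dk k)) ∧
      ∀ k, (nbhdLift d (Nb j) (Dk k)).mulVec ψ = 0) ∧
    IsGAS (∑ j, Lj j) (Matrix.vecMulVec ψ (star ψ))

/-- The (vector) Schmidt span of `ψ` relative to the neighborhood factor `H_N`. -/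
def vecSchmidt (N : Finset (Fin n)) (ψ : (∀ a, d a) → ℂ) : Set (nbhdIdx d N → ℂ) :=
  {w | ∃ b : nbhdCoIdx d N → ℂ,
    w = fun i => ∑ k, (starRingEnd ℂ) (b k) * ψ ((splitEquiv d N).symm (i, k))}

/-- `Σ_N(ψ) ⊗ H_N̄` as a subspace of `H`. -/
noncomputable def extVecSchmidt (N : Finset (Fin n)) (ψ : (∀ a, d a) → ℂ) :
    Submodule ℂ ((∀ a, d a) → ℂ) :=
  Submodule.span ℂ {v | ∃ w ∈ vecSchmidt d N ψ, ∃ b : nbhdCoIdx d N → ℂ,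
    v = fun x => w ((splitEquiv d N) x).1 * b ((splitEquiv d N) x).2}

end Multipartite

/-!
If a Lindblad generator `L` annihilates a full-rank state `ρ`, then the kernel of its dual is the
commutant `C` of the Hamiltonian, the noise operators and their adjoints. Moreover `C ρ ⊆ ker L`,
and equality holds because the two kernels have the same dimension. Hence `ker L` is closed under
the adjoint, under `X, Y ↦ X ρ⁻¹ Y` and under `X ↦ ρ X ρ⁻¹`, and also under
`X ↦ ρ^{1/2} X ρ^{-1/2}`, which is a polynomial in the latter map.

Let now `L` be a neighborhood generator annihilating `ρ` whose neighborhood satisfies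
`F_{ρ_N}(Σ_N(ρ)) = B(H_N)`. The elements of `Σ_N(ρ)` vanish on the kernel of `ρ_N`, so `ρ_N` has
full rank; they are also annihilated by `L` acting on `H_N`. Therefore `L = 0`.

Every other generator acts on one side of the cut only, so it annihilates the product of the two
marginals of `ρ`. That product is a state invariant under the total generator, and a globally
asymptotically stable state is the only invariant state.
-/

section Diagonalizable

variable {K V κ : Type*} [Field K] [AddCommGroup V] [Module K V] [Finite κ]

theorem exists_aeval_eq_of_apply_eq_smul {f g : Module.End K V} {v : κ → V} {a c : κ → K}
    (hv : Submodule.span K (Set.range v) = ⊤) (hf : ∀ i, f (v i) = a i • v i)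
    (hg : ∀ i, g (v i) = c i • v i) (hac : c.FactorsThrough a) :
    ∃ p : Polynomial K, Polynomial.aeval f p = g := by
  classical
  have := Fintype.ofFinite κ
  let p := Lagrange.interpolate (Finset.univ.image a) id (Function.extend a c 0)
  have hp (i : κ) : p.eval (a i) = c i := by
    rw [← hac.extend_apply 0 i]
    exact Lagrange.eval_interpolate_at_node _ (Set.injOn_id _)
      (Finset.mem_image_of_mem a (Finset.mem_univ i))
  refine ⟨p, LinearMap.ext_on hv ?_⟩
  rintro _ ⟨i, rfl⟩
  rw [Module.End.aeval_apply_of_mem_apply_eq_smul (hf i), hp, hg]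

theorem apply_mem_of_factorsThrough {f g : Module.End K V} {v : κ → V} {a c : κ → K}
    (hv : Submodule.span K (Set.range v) = ⊤) (hf : ∀ i, f (v i) = a i • v i)
    (hg : ∀ i, g (v i) = c i • v i) (hac : c.FactorsThrough a) {W : Submodule K V}
    (hW : W ∈ f.invtSubmodule) {x : V} (hx : x ∈ W) : g x ∈ W := by
  obtain ⟨p, rfl⟩ := exists_aeval_eq_of_apply_eq_smul hv hf hg hac
  exact Polynomial.aeval_apply_smul_mem_of_le_comap' hx p f hW

end Diagonalizable

theorem finrank_ker_eq_of_isAdjointPair {K V : Type*} [Field K] [AddCommGroup V] [Module K V]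
    [FiniteDimensional K V] {B : LinearMap.BilinForm K V} (hB : B.Nondegenerate)
    {f g : Module.End K V} (hfg : LinearMap.IsAdjointPair B B f g) :
    Module.finrank K (LinearMap.ker f) = Module.finrank K (LinearMap.ker g) := by
  have hker : LinearMap.ker g = B.orthogonal (LinearMap.range f) := by
    ext y
    rw [LinearMap.BilinForm.mem_orthogonal_iff, LinearMap.mem_ker]
    constructor
    · rintro hy _ ⟨x, rfl⟩
      rw [hfg x y, hy, map_zero]
    · intro hy
      exact hB.2 _ fun x => (hfg x y).symm.trans (hy _ ⟨x, rfl⟩)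
  have hrank := LinearMap.finrank_range_add_finrank_ker f
  have hperp := LinearMap.BilinForm.finrank_orthogonal hB (LinearMap.range f)
  rw [hker]
  omega

section SquareMatrix

variable {ι : Type*} [Fintype ι]

theorem mpinv_eq_inv [DecidableEq ι] {A : Matrix ι ι ℂ} (hA : IsUnit A) : mpinv A = A⁻¹ := by
  have hdet := (Matrix.isUnit_iff_isUnit_det A).1 hA
  have hex : ∃ B : Matrix ι ι ℂ,
      A * B * A = A ∧ B * A * B = B ∧ (A * B)ᴴ = A * B ∧ (B * A)ᴴ = B * A :=
    ⟨A⁻¹, by simp [Matrix.mul_nonsing_inv _ hdet, Matrix.nonsing_inv_mul _ hdet]⟩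
  rw [mpinv, dif_pos hex]
  exact (Matrix.inv_eq_right_inv
    (hA.mul_right_cancel (hex.choose_spec.1.trans (one_mul A).symm))).symm

theorem mpinv_mulVec_eq_zero {A : Matrix ι ι ℂ} {v : ι → ℂ} (hv : Aᴴ *ᵥ v = 0) :
    mpinv A *ᵥ v = 0 := by
  rw [mpinv]
  split_ifs with hex
  · obtain ⟨-, hBAB, hAB, -⟩ := hex.choose_spec
    set B := hex.choose
    calc B *ᵥ v = (B * (A * B)ᴴ) *ᵥ v := by rw [hAB, ← Matrix.mul_assoc, hBAB]
      _ = (B * Bᴴ) *ᵥ (Aᴴ *ᵥ v) := by rw [conjTranspose_mul, mulVec_mulVec, Matrix.mul_assoc]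
      _ = 0 := by rw [hv, mulVec_zero]
  · exact zero_mulVec v

theorem msqrt_spec {A : Matrix ι ι ℂ} (hA : A.PosSemidef) :
    (msqrt A).PosSemidef ∧ msqrt A * msqrt A = A := by
  classical
  open scoped MatrixOrder in
  have hex : ∃ B : Matrix ι ι ℂ, B.PosSemidef ∧ B * B = A :=
    ⟨CFC.sqrt A, Matrix.nonneg_iff_posSemidef.1 (CFC.sqrt_nonneg A),
      CFC.sqrt_mul_sqrt_self A (Matrix.nonneg_iff_posSemidef.2 hA)⟩
  rw [msqrt, dif_pos hex]
  exact hex.choose_spec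

theorem conjTranspose_msqrt_mul_msqrt {A : Matrix ι ι ℂ} (hA : A.PosSemidef) :
    (msqrt A)ᴴ * msqrt A = A := by
  rw [(msqrt_spec hA).1.isHermitian.eq, (msqrt_spec hA).2]

theorem posDef_msqrt {A : Matrix ι ι ℂ} (hA : A.PosDef) : (msqrt A).PosDef := by
  classical
  obtain ⟨hpos, hsq⟩ := msqrt_spec hA.posSemidef
  exact hpos.posDef_iff_isUnit.2 (isUnit_of_mul_isUnit_left (hsq.symm ▸ hA.isUnit))

theorem eq_zero_of_trace_mul_mul_conjTranspose_eq_zero {ρ C : Matrix ι ι ℂ} (hρ : ρ.PosDef)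
    (h : (C * ρ * Cᴴ).trace = 0) : C = 0 := by
  classical
  obtain ⟨hpos, hsq⟩ := msqrt_spec hρ.posSemidef
  have hCs : C * msqrt ρ = 0 := by
    rw [← trace_mul_conjTranspose_self_eq_zero_iff, conjTranspose_mul, hpos.isHermitian.eq,
      Matrix.mul_assoc, ← Matrix.mul_assoc (msqrt ρ), hsq, ← Matrix.mul_assoc, h]
  exact (posDef_msqrt hρ).isUnit.mul_right_cancel (hCs.trans (zero_mul _).symm)

variable [DecidableEq ι]

theorem span_range_mul_single_mul_eq_top {U U' V V' : Matrix ι ι ℂ} (hU : U * U' = 1)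
    (hV : V' * V = 1) :
    Submodule.span ℂ (Set.range fun p : ι × ι => U * single p.1 p.2 1 * V) = ⊤ := by
  let f := LinearMap.mulRight ℂ V ∘ₗ LinearMap.mulLeft ℂ U
  have hf : LinearMap.range f = ⊤ := by
    refine LinearMap.range_eq_top.2 fun X => ⟨U' * X * V', ?_⟩
    calc U * (U' * X * V') * V = U * U' * X * (V' * V) := by simp only [Matrix.mul_assoc]
      _ = X := by rw [hU, hV, one_mul, mul_one]
  have hrange : (Set.range fun p : ι × ι => U * single p.1 p.2 1 * V) =
      f '' Set.range (Matrix.stdBasis ℂ ι ι) := by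
    rw [← Set.range_comp]
    exact congrArg Set.range (funext fun ⟨i, j⟩ => by simp [f, Matrix.stdBasis_eq_single])
  rw [hrange, Submodule.span_image, Module.Basis.span_eq, Submodule.map_top, hf]

theorem exists_span_eq_top_mul_eq_smul {s : Matrix ι ι ℂ} (hs : s.IsHermitian) :
    ∃ v : ι × ι → Matrix ι ι ℂ, Submodule.span ℂ (Set.range v) = ⊤ ∧
      ∀ p, s * v p = (hs.eigenvalues p.1 : ℂ) • v p ∧ v p * s = (hs.eigenvalues p.2 : ℂ) • v p := by
  set U : Matrix ι ι ℂ := (hs.eigenvectorUnitary : Matrix ι ι ℂ)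
  set D : Matrix ι ι ℂ := diagonal fun i => (hs.eigenvalues i : ℂ)
  have hUU : U * star U = 1 := Unitary.coe_mul_star_self hs.eigenvectorUnitary
  have hUU' : star U * U = 1 := Unitary.coe_star_mul_self hs.eigenvectorUnitary
  have hspec : s = U * D * star U := hs.spectral_theorem
  have hsU : s * U = U * D := by rw [hspec, Matrix.mul_assoc, hUU', mul_one]
  have hUs : star U * s = D * star U := by
    rw [hspec, Matrix.mul_assoc, ← Matrix.mul_assoc (star U), hUU', one_mul]
  have hDE (i j : ι) : D * single i j 1 = (hs.eigenvalues i : ℂ) • single i j 1 := by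
    ext a b
    rw [diagonal_mul, Matrix.smul_apply, smul_eq_mul, single_apply]
    split_ifs with h <;> simp [h]
  have hED (i j : ι) : single i j 1 * D = (hs.eigenvalues j : ℂ) • single i j 1 := by
    ext a b
    rw [mul_diagonal, Matrix.smul_apply, smul_eq_mul, single_apply, mul_comm]
    split_ifs with h <;> simp [h]
  refine ⟨fun p => U * single p.1 p.2 1 * star U,
    span_range_mul_single_mul_eq_top hUU hUU,
    fun p => ⟨?_, ?_⟩⟩
  · calc s * (U * single p.1 p.2 1 * star U) = U * (D * single p.1 p.2 1) * star U := by
          simp only [← Matrix.mul_assoc, hsU]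
      _ = _ := by rw [hDE, Matrix.mul_smul, Matrix.smul_mul]
  · calc U * single p.1 p.2 1 * star U * s = U * (single p.1 p.2 1 * D) * star U := by
          simp only [Matrix.mul_assoc, hUs]
      _ = _ := by rw [hED, Matrix.mul_smul, Matrix.smul_mul]

theorem conj_mem_of_conj_sq_mem {s : Matrix ι ι ℂ} (hs : s.PosDef)
    {W : Submodule ℂ (Matrix ι ι ℂ)} (hW : ∀ X ∈ W, s * s * X * (s * s)⁻¹ ∈ W)
    {X : Matrix ι ι ℂ} (hX : X ∈ W) : s * X * s⁻¹ ∈ W := by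
  have hdet := (Matrix.isUnit_iff_isUnit_det s).1 hs.isUnit
  obtain ⟨v, hspan, hv⟩ := exists_span_eq_top_mul_eq_smul hs.isHermitian
  let T : Module.End ℂ (Matrix ι ι ℂ) := LinearMap.mulRight ℂ s⁻¹ ∘ₗ LinearMap.mulLeft ℂ s
  let r (p : ι × ι) : ℝ := hs.isHermitian.eigenvalues p.1 / hs.isHermitian.eigenvalues p.2
  have hr (p : ι × ι) : 0 < r p := div_pos (hs.eigenvalues_pos _) (hs.eigenvalues_pos _)
  have hT (p : ι × ι) : T (v p) = (r p : ℂ) • v p := by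
    have hne : (hs.isHermitian.eigenvalues p.2 : ℂ) ≠ 0 := by
      exact_mod_cast (hs.eigenvalues_pos _).ne'
    have hinv : v p * s⁻¹ = (hs.isHermitian.eigenvalues p.2 : ℂ)⁻¹ • v p := by
      rw [eq_inv_smul_iff₀ hne, ← Matrix.smul_mul, ← (hv p).2, Matrix.mul_assoc,
        Matrix.mul_nonsing_inv _ hdet, mul_one]
    change s * v p * s⁻¹ = _
    rw [(hv p).1, Matrix.smul_mul, hinv, smul_smul, Complex.ofReal_div, div_eq_mul_inv]
  have hTT (p : ι × ι) : (T * T) (v p) = ((r p : ℂ) ^ 2) • v p := by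
    rw [Module.End.mul_apply, hT, map_smul, hT, smul_smul, sq]
  -- The eigenvalues `r p` of `T` are positive, so they are determined by those of `T * T`.
  refine apply_mem_of_factorsThrough (g := T) hspan hTT hT ?_ (fun Z hZ => ?_) hX
  · intro p q (hpq : (r p : ℂ) ^ 2 = (r q : ℂ) ^ 2)
    have hsq : r p ^ 2 = r q ^ 2 := by exact_mod_cast hpq
    exact congrArg _ ((pow_left_inj₀ (hr p).le (hr q).le two_ne_zero).1 hsq)
  · have hTTZ : (T * T) Z = s * s * Z * (s * s)⁻¹ := by
      simp [T, Matrix.mul_inv_rev, Matrix.mul_assoc]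
    rw [Submodule.mem_comap, hTTZ]
    exact hW Z hZ

end SquareMatrix

/-! ### Generators with a full-rank invariant state -/

section Lindblad

variable {ι : Type*} [Fintype ι] {m : ℕ}

/-- The Heisenberg-picture dissipator `X ↦ L† X L - ½{L†L, X}` of a noise operator `L`. -/
noncomputable def dualDissipator (L : Matrix ι ι ℂ) : Matrix ι ι ℂ →ₗ[ℂ] Matrix ι ι ℂ :=
  LinearMap.mulRight ℂ L ∘ₗ LinearMap.mulLeft ℂ Lᴴ -
    ((1 : ℂ) / 2) • (LinearMap.mulLeft ℂ (Lᴴ * L) + LinearMap.mulRight ℂ (Lᴴ * L))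

theorem dualDissipator_apply (L X : Matrix ι ι ℂ) :
    dualDissipator L X = Lᴴ * X * L - ((1 : ℂ) / 2) • (Lᴴ * L * X + X * (Lᴴ * L)) := by
  simp [dualDissipator, Matrix.mul_assoc]

theorem trace_dualDissipator_mul (L X Y : Matrix ι ι ℂ) :
    (dualDissipator L X * Y).trace =
      (X * (L * Y * Lᴴ - ((1 : ℂ) / 2) • (Lᴴ * L * Y + Y * (Lᴴ * L)))).trace := by
  have hjump : (Lᴴ * X * L * Y).trace = (X * (L * Y * Lᴴ)).trace := by
    rw [Matrix.mul_assoc, Matrix.mul_assoc, trace_mul_comm]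
    simp only [Matrix.mul_assoc]
  have hleft : (Lᴴ * L * X * Y).trace = (X * (Y * (Lᴴ * L))).trace := by
    rw [Matrix.mul_assoc, trace_mul_comm, Matrix.mul_assoc]
  have hright : (X * (Lᴴ * L) * Y).trace = (X * (Lᴴ * L * Y)).trace := by
    rw [Matrix.mul_assoc]
  rw [dualDissipator_apply, sub_mul, mul_sub, trace_sub, trace_sub, Matrix.smul_mul,
    Matrix.mul_smul, trace_smul, trace_smul, add_mul, mul_add, trace_add, trace_add, hjump,
    hleft, hright, add_comm (X * (Y * (Lᴴ * L))).trace]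

theorem dualDissipator_conjTranspose (L X : Matrix ι ι ℂ) :
    dualDissipator L Xᴴ = (dualDissipator L X)ᴴ := by
  simp [dualDissipator_apply, conjTranspose_mul, Matrix.mul_assoc, add_comm]

theorem dualDissipator_conjTranspose_mul (L X Y : Matrix ι ι ℂ) :
    dualDissipator L (Xᴴ * Y) = dualDissipator L Xᴴ * Y + Xᴴ * dualDissipator L Y +
      (L * X - X * L)ᴴ * (L * Y - Y * L) := by
  simp only [dualDissipator_apply, conjTranspose_sub, conjTranspose_mul, mul_sub, sub_mul,
    Matrix.smul_mul, Matrix.mul_smul, mul_add, add_mul, Matrix.mul_assoc, smul_add]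
  module

/-- The Heisenberg-picture generator `X ↦ i[Hm, X] + ∑ₖ (Lₖ† X Lₖ - ½{Lₖ†Lₖ, X})`, dual to
`lindbladMap Hm Lk` for the trace pairing `(X, Y) ↦ Tr(X Y)`. -/
noncomputable def heisenbergMap (Hm : Matrix ι ι ℂ) (Lk : Fin m → Matrix ι ι ℂ) :
    Matrix ι ι ℂ →ₗ[ℂ] Matrix ι ι ℂ :=
  Complex.I • (LinearMap.mulLeft ℂ Hm - LinearMap.mulRight ℂ Hm) + ∑ k, dualDissipator (Lk k)

theorem heisenbergMap_apply (Hm : Matrix ι ι ℂ) (Lk : Fin m → Matrix ι ι ℂ) (X : Matrix ι ι ℂ) :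
    heisenbergMap Hm Lk X = Complex.I • (Hm * X - X * Hm) + ∑ k, dualDissipator (Lk k) X := by
  simp [heisenbergMap, LinearMap.sum_apply]

theorem heisenbergMap_conjTranspose {Hm : Matrix ι ι ℂ} (hH : Hm.IsHermitian)
    (Lk : Fin m → Matrix ι ι ℂ) (X : Matrix ι ι ℂ) :
    heisenbergMap Hm Lk Xᴴ = (heisenbergMap Hm Lk X)ᴴ := by
  have hHam : (Complex.I • (Hm * X - X * Hm))ᴴ = Complex.I • (Hm * Xᴴ - Xᴴ * Hm) := by
    rw [conjTranspose_smul, conjTranspose_sub, conjTranspose_mul, conjTranspose_mul, hH.eq,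
      Complex.star_def, Complex.conj_I, neg_smul, ← smul_neg, neg_sub]
  simp only [heisenbergMap_apply, conjTranspose_add, conjTranspose_sum, hHam,
    dualDissipator_conjTranspose]

theorem heisenbergMap_conjTranspose_mul (Hm : Matrix ι ι ℂ) (Lk : Fin m → Matrix ι ι ℂ)
    (X Y : Matrix ι ι ℂ) :
    heisenbergMap Hm Lk (Xᴴ * Y) = heisenbergMap Hm Lk Xᴴ * Y + Xᴴ * heisenbergMap Hm Lk Y +
      ∑ k, (Lk k * X - X * Lk k)ᴴ * (Lk k * Y - Y * Lk k) := by
  have hHam : Complex.I • (Hm * (Xᴴ * Y) - Xᴴ * Y * Hm) =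
      Complex.I • (Hm * Xᴴ - Xᴴ * Hm) * Y + Xᴴ * Complex.I • (Hm * Y - Y * Hm) := by
    simp only [mul_sub, sub_mul, Matrix.smul_mul, Matrix.mul_smul, Matrix.mul_assoc, smul_sub]
    abel
  simp only [heisenbergMap_apply, hHam, dualDissipator_conjTranspose_mul, Finset.sum_add_distrib,
    add_mul, mul_add, Finset.sum_mul, Finset.mul_sum]
  abel

variable [DecidableEq ι]

theorem lindbladMap_apply (Hm : Matrix ι ι ℂ) (Lk : Fin m → Matrix ι ι ℂ) (X : Matrix ι ι ℂ) :
    lindbladMap Hm Lk X = (-Complex.I) • (Hm * X - X * Hm) +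
      ∑ k, (Lk k * X * (Lk k)ᴴ -
        ((1 : ℂ) / 2) • ((Lk k)ᴴ * Lk k * X + X * ((Lk k)ᴴ * Lk k))) := by
  simp [lindbladMap, LinearMap.sum_apply, Matrix.mul_assoc]

theorem lindbladMap_conjTranspose {Hm : Matrix ι ι ℂ} (hH : Hm.IsHermitian)
    (Lk : Fin m → Matrix ι ι ℂ) (X : Matrix ι ι ℂ) :
    lindbladMap Hm Lk Xᴴ = (lindbladMap Hm Lk X)ᴴ := by
  rw [lindbladMap_apply, lindbladMap_apply, conjTranspose_add, conjTranspose_sum]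
  congr 1
  · rw [conjTranspose_smul, conjTranspose_sub, conjTranspose_mul, conjTranspose_mul, hH.eq,
      star_neg, Complex.star_def, Complex.conj_I, neg_neg, neg_smul, ← smul_neg, neg_sub]
  · refine Finset.sum_congr rfl fun k _ => ?_
    simp [conjTranspose_mul, Matrix.mul_assoc, add_comm]

theorem trace_heisenbergMap_mul (Hm : Matrix ι ι ℂ) (Lk : Fin m → Matrix ι ι ℂ)
    (X Y : Matrix ι ι ℂ) :
    (heisenbergMap Hm Lk X * Y).trace = (X * lindbladMap Hm Lk Y).trace := by
  have hHam : (Complex.I • (Hm * X - X * Hm) * Y).trace =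
      (X * (-Complex.I) • (Hm * Y - Y * Hm)).trace := by
    rw [Matrix.smul_mul, Matrix.mul_smul, trace_smul, trace_smul, sub_mul, mul_sub, trace_sub,
      trace_sub, Matrix.mul_assoc Hm, trace_mul_comm Hm, Matrix.mul_assoc X Y,
      Matrix.mul_assoc X Hm, neg_smul, ← smul_neg, neg_sub]
  rw [heisenbergMap_apply, lindbladMap_apply, add_mul, mul_add, trace_add, trace_add, hHam,
    Finset.sum_mul, Finset.mul_sum, trace_sum, trace_sum]
  simp only [trace_dualDissipator_mul]

theorem finrank_ker_heisenbergMap (Hm : Matrix ι ι ℂ) (Lk : Fin m → Matrix ι ι ℂ) :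
    Module.finrank ℂ (LinearMap.ker (heisenbergMap Hm Lk)) =
      Module.finrank ℂ (LinearMap.ker (lindbladMap Hm Lk)) := by
  let B : LinearMap.BilinForm ℂ (Matrix ι ι ℂ) :=
    (LinearMap.mul ℂ (Matrix ι ι ℂ)).compr₂ (traceLinearMap ι ℂ ℂ)
  have hB : B.Nondegenerate :=
    ⟨fun X hX => ext_iff_trace_mul_right.2 fun Y => by simpa [B] using hX Y,
      fun Y hY => ext_iff_trace_mul_left.2 fun X => by simpa [B] using hY X⟩
  exact finrank_ker_eq_of_isAdjointPair hB (trace_heisenbergMap_mul Hm Lk)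

theorem commute_of_heisenbergMap_eq_zero {Hm ρ : Matrix ι ι ℂ} (hH : Hm.IsHermitian)
    {Lk : Fin m → Matrix ι ι ℂ} (hρ : ρ.PosDef) (hinv : lindbladMap Hm Lk ρ = 0)
    {X : Matrix ι ι ℂ} (hX : heisenbergMap Hm Lk X = 0) (k : Fin m) : Commute (Lk k) X := by
  let C (k : Fin m) : Matrix ι ι ℂ := Lk k * X - X * Lk k
  have hdiss : heisenbergMap Hm Lk (Xᴴ * X) = ∑ k, (C k)ᴴ * C k := by
    rw [heisenbergMap_conjTranspose_mul, heisenbergMap_conjTranspose hH, hX, conjTranspose_zero,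
      zero_mul, mul_zero, add_zero, zero_add]
  have hcycle (k : Fin m) : ((C k)ᴴ * C k * ρ).trace = (C k * ρ * (C k)ᴴ).trace := by
    rw [Matrix.mul_assoc, trace_mul_comm]
  have hsum : ∑ k, (C k * ρ * (C k)ᴴ).trace = 0 := by
    calc ∑ k, (C k * ρ * (C k)ᴴ).trace = (heisenbergMap Hm Lk (Xᴴ * X) * ρ).trace := by
          rw [hdiss, Finset.sum_mul, trace_sum, Finset.sum_congr rfl fun k _ => hcycle k]
      _ = 0 := by rw [trace_heisenbergMap_mul, hinv, mul_zero, trace_zero]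
  rw [Finset.sum_eq_zero_iff_of_nonneg
    fun k _ => (hρ.posSemidef.mul_mul_conjTranspose_same (C k)).trace_nonneg] at hsum
  exact sub_eq_zero.1
    (eq_zero_of_trace_mul_mul_conjTranspose_eq_zero hρ (hsum k (Finset.mem_univ k)))

/-- The *-algebra of operators commuting with the Hamiltonian `Hm`, the noise operators `Lk` and
their adjoints. -/
def noiseCommutant (Hm : Matrix ι ι ℂ) (Lk : Fin m → Matrix ι ι ℂ) :
    StarSubalgebra ℂ (Matrix ι ι ℂ) :=
  StarSubalgebra.centralizer ℂ (insert Hm (Set.range Lk))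

theorem mem_noiseCommutant_iff {Hm : Matrix ι ι ℂ} (hH : Hm.IsHermitian)
    {Lk : Fin m → Matrix ι ι ℂ} {X : Matrix ι ι ℂ} :
    X ∈ noiseCommutant Hm Lk ↔ Commute Hm X ∧ ∀ k, Commute (Lk k) X ∧ Commute (Lk k)ᴴ X := by
  simp [noiseCommutant, StarSubalgebra.mem_centralizer_iff, star_eq_conjTranspose, hH.eq, Commute,
    SemiconjBy]

theorem lindbladMap_mul_of_mem_noiseCommutant {Hm : Matrix ι ι ℂ} (hH : Hm.IsHermitian)
    {Lk : Fin m → Matrix ι ι ℂ} {X : Matrix ι ι ℂ} (hX : X ∈ noiseCommutant Hm Lk)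
    (Y : Matrix ι ι ℂ) : lindbladMap Hm Lk (X * Y) = X * lindbladMap Hm Lk Y := by
  obtain ⟨hHX, hLX⟩ := (mem_noiseCommutant_iff hH).1 hX
  rw [lindbladMap_apply, lindbladMap_apply, mul_add, Finset.mul_sum]
  congr 1
  · rw [← Matrix.mul_assoc, hHX.eq, Matrix.mul_smul, mul_sub]
    simp only [Matrix.mul_assoc]
  · refine Finset.sum_congr rfl fun k _ => ?_
    obtain ⟨hL, hL'⟩ := hLX k
    have hjump : Lk k * (X * Y) * (Lk k)ᴴ = X * (Lk k * Y * (Lk k)ᴴ) := by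
      rw [← Matrix.mul_assoc, hL.eq]
      simp only [Matrix.mul_assoc]
    have hdrift : (Lk k)ᴴ * Lk k * (X * Y) = X * ((Lk k)ᴴ * Lk k * Y) := by
      rw [← Matrix.mul_assoc, (hL'.mul_left hL).eq, Matrix.mul_assoc]
    rw [hjump, hdrift, mul_sub, Matrix.mul_smul, mul_add, Matrix.mul_assoc X Y]

variable {Hm ρ : Matrix ι ι ℂ} {Lk : Fin m → Matrix ι ι ℂ}

theorem mem_noiseCommutant_of_heisenbergMap_eq_zero (hH : Hm.IsHermitian) (hρ : ρ.PosDef)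
    (hinv : lindbladMap Hm Lk ρ = 0) {X : Matrix ι ι ℂ} (hX : heisenbergMap Hm Lk X = 0) :
    X ∈ noiseCommutant Hm Lk := by
  have hL (k : Fin m) : Commute (Lk k) X := commute_of_heisenbergMap_eq_zero hH hρ hinv hX k
  have hL' (k : Fin m) : Commute (Lk k)ᴴ X := by
    have hXstar : heisenbergMap Hm Lk Xᴴ = 0 := by
      rw [heisenbergMap_conjTranspose hH, hX, conjTranspose_zero]
    simpa [star_eq_conjTranspose] using
      (commute_of_heisenbergMap_eq_zero hH hρ hinv hXstar k).star_star
  refine (mem_noiseCommutant_iff hH).2 ⟨?_, fun k => ⟨hL k, hL' k⟩⟩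
  have hdual (k : Fin m) : dualDissipator (Lk k) X = 0 := by
    rw [dualDissipator_apply, (hL' k).eq, ((hL' k).mul_left (hL k)).eq, Matrix.mul_assoc]
    module
  rw [heisenbergMap_apply, Finset.sum_eq_zero fun k _ => hdual k, add_zero] at hX
  exact sub_eq_zero.1 ((smul_eq_zero.1 hX).resolve_left Complex.I_ne_zero)

theorem mul_inv_mem_noiseCommutant (hH : Hm.IsHermitian) (hρ : ρ.PosDef)
    (hinv : lindbladMap Hm Lk ρ = 0) {Y : Matrix ι ι ℂ} (hY : lindbladMap Hm Lk Y = 0) :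
    Y * ρ⁻¹ ∈ noiseCommutant Hm Lk := by
  have hdet := (Matrix.isUnit_iff_isUnit_det ρ).1 hρ.isUnit
  have hinj : Function.Injective (LinearMap.mulRight ℂ ρ) :=
    fun _ _ h => hρ.isUnit.mul_right_cancel h
  have hle : (LinearMap.ker (heisenbergMap Hm Lk)).map (LinearMap.mulRight ℂ ρ) ≤
      LinearMap.ker (lindbladMap Hm Lk) := by
    rintro _ ⟨X, hX, rfl⟩
    have hXmem := mem_noiseCommutant_of_heisenbergMap_eq_zero hH hρ hinv hX
    rw [LinearMap.mem_ker, LinearMap.mulRight_apply, lindbladMap_mul_of_mem_noiseCommutant hH hXmem,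
      hinv, mul_zero]
  have hker := Submodule.eq_of_le_of_finrank_eq hle (by
    rw [← (Submodule.equivMapOfInjective _ hinj _).finrank_eq, finrank_ker_heisenbergMap])
  obtain ⟨X, hX, rfl⟩ : Y ∈ (LinearMap.ker (heisenbergMap Hm Lk)).map (LinearMap.mulRight ℂ ρ) :=
    hker.ge hY
  rw [LinearMap.mulRight_apply, Matrix.mul_assoc, Matrix.mul_nonsing_inv _ hdet, mul_one]
  exact mem_noiseCommutant_of_heisenbergMap_eq_zero hH hρ hinv hX

end Lindblad

section DistortedAlgebra

variable {ι : Type*} [Fintype ι]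

theorem posDef_of_Fdist_eq_top {ρ : Matrix ι ι ℂ} (hρ : ρ.PosSemidef) {W : Set (Matrix ι ι ℂ)}
    (hW : ∀ X ∈ W, ∀ v : ι → ℂ, ρ *ᵥ v = 0 → X *ᵥ v = 0 ∧ Xᴴ *ᵥ v = 0)
    (hF : Fdist ρ W = ⊤) : ρ.PosDef := by
  classical
  refine hρ.posDef_iff_isUnit.2 (mulVec_injective_iff_isUnit.1 ?_)
  refine (injective_iff_map_eq_zero ρ.mulVecLin).2 fun v hv => ?_
  let S : Submodule ℂ (Matrix ι ι ℂ) :=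
    { carrier := {X | X *ᵥ v = 0 ∧ Xᴴ *ᵥ v = 0}
      add_mem' := fun hX hY => by simp [add_mulVec, hX.1, hX.2, hY.1, hY.2]
      zero_mem' := by simp
      smul_mem' := fun c X hX => by simp [smul_mulVec, hX.1, hX.2] }
  obtain ⟨hpos, -⟩ := msqrt_spec hρ
  have hsv : msqrt ρ *ᵥ v = 0 := by
    rw [← conjTranspose_mul_self_mulVec_eq_zero, conjTranspose_msqrt_mul_msqrt hρ]
    exact hv
  have hsv' : mpinv (msqrt ρ) *ᵥ v = 0 := mpinv_mulVec_eq_zero (by rwa [hpos.isHermitian.eq])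
  have hS : Fdist ρ W ≤ S := by
    refine sInf_le ⟨fun X hX => hW X hX v hv, ?_, ?_, ?_⟩
    · rintro X ⟨hX, hX'⟩
      exact ⟨hX', by rwa [conjTranspose_conjTranspose]⟩
    · rintro X ⟨-, hX'⟩ Y ⟨hY, -⟩
      refine ⟨by rw [← mulVec_mulVec, hY, mulVec_zero], ?_⟩
      rw [conjTranspose_mul, conjTranspose_mul, ← mulVec_mulVec, ← mulVec_mulVec, hX', mulVec_zero,
        mulVec_zero]
    · intro X _
      refine ⟨by rw [← mulVec_mulVec, hsv', mulVec_zero], ?_⟩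
      rw [conjTranspose_mul, conjTranspose_mul, hpos.isHermitian.eq, ← mulVec_mulVec,
        ← mulVec_mulVec, hsv, mulVec_zero, mulVec_zero]
  have hone : (1 : Matrix ι ι ℂ) ∈ S := hS (hF ▸ Submodule.mem_top)
  simpa using hone.1

theorem lindbladMap_eq_zero_of_Fdist_eq_top [DecidableEq ι] {Hm ρ : Matrix ι ι ℂ}
    (hH : Hm.IsHermitian) {m : ℕ} {Lk : Fin m → Matrix ι ι ℂ} (hρ : ρ.PosDef)
    (hinv : lindbladMap Hm Lk ρ = 0) {W : Set (Matrix ι ι ℂ)}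
    (hW : ∀ X ∈ W, lindbladMap Hm Lk X = 0) (hF : Fdist ρ W = ⊤) : lindbladMap Hm Lk = 0 := by
  have hstar {X : Matrix ι ι ℂ} (hX : lindbladMap Hm Lk X = 0) : lindbladMap Hm Lk Xᴴ = 0 := by
    rw [lindbladMap_conjTranspose hH, hX, conjTranspose_zero]
  have hmul {Z Y : Matrix ι ι ℂ} (hZ : Z ∈ noiseCommutant Hm Lk) (hY : lindbladMap Hm Lk Y = 0) :
      lindbladMap Hm Lk (Z * Y) = 0 := by
    rw [lindbladMap_mul_of_mem_noiseCommutant hH hZ, hY, mul_zero]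
  have hle : Fdist ρ W ≤ LinearMap.ker (lindbladMap Hm Lk) := by
    refine sInf_le ⟨hW, fun X => hstar, fun X hX Y hY => ?_, fun X hX => ?_⟩
    · rw [mpinv_eq_inv hρ.isUnit]
      exact hmul (mul_inv_mem_noiseCommutant hH hρ hinv hX) hY
    · have hs := posDef_msqrt hρ
      rw [mpinv_eq_inv hs.isUnit]
      refine conj_mem_of_conj_sq_mem hs (fun Y hY => ?_) hX
      have hZ := mul_inv_mem_noiseCommutant hH hρ hinv hY
      have hconj : ρ * Y * ρ⁻¹ = ((Y * ρ⁻¹)ᴴ * ρ)ᴴ := by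
        rw [conjTranspose_mul, conjTranspose_conjTranspose, hρ.isHermitian.eq, Matrix.mul_assoc]
      rw [(msqrt_spec hρ.posSemidef).2, hconj]
      exact hstar (hmul (star_mem hZ) hinv)
  exact LinearMap.ker_eq_top.1 (top_le_iff.1 (hF ▸ hle))

end DistortedAlgebra

/-! ### Bipartite factorizations -/

section TensorLift

variable {ι α β : Type*}

/-- The operator `A ⊗ B` on a system whose index type is factorized by `e`. -/
def tensorLift (e : ι ≃ α × β) (A : Matrix α α ℂ) (B : Matrix β β ℂ) : Matrix ι ι ℂ :=
  (kroneckerMap (· * ·) A B).submatrix e e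

/-- The `(k, k')` block `(I ⊗ ⟨k|) M (I ⊗ |k'⟩)` of an operator `M`. -/
def block (e : ι ≃ α × β) (k k' : β) : Matrix ι ι ℂ →ₗ[ℂ] Matrix α α ℂ where
  toFun M := M.submatrix (fun i => e.symm (i, k)) fun j => e.symm (j, k')
  map_add' _ _ := rfl
  map_smul' _ _ := rfl

theorem block_apply (e : ι ≃ α × β) (k k' : β) (M : Matrix ι ι ℂ) (i j : α) :
    block e k k' M i j = M (e.symm (i, k)) (e.symm (j, k')) :=
  rfl

theorem block_ext (e : ι ≃ α × β) {M M' : Matrix ι ι ℂ}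
    (h : ∀ k k', block e k k' M = block e k k' M') : M = M' := by
  ext x y
  simpa [block_apply] using congrFun₂ (h (e x).2 (e y).2) (e x).1 (e y).1

theorem conjTranspose_block (e : ι ≃ α × β) (k k' : β) (M : Matrix ι ι ℂ) :
    (block e k k' M)ᴴ = block e k' k Mᴴ :=
  rfl

theorem block_tensorLift (e : ι ≃ α × β) (k k' : β) (A : Matrix α α ℂ) (B : Matrix β β ℂ) :
    block e k k' (tensorLift e A B) = B k k' • A := by
  ext i j
  simp [block_apply, tensorLift, mul_comm]

theorem tensorLift_trans_prodComm (e : ι ≃ α × β) (A : Matrix α α ℂ) (B : Matrix β β ℂ) :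
    tensorLift (e.trans (Equiv.prodComm α β)) B A = tensorLift e A B := by
  ext x y
  simp [tensorLift, mul_comm]

theorem conjTranspose_tensorLift (e : ι ≃ α × β) (A : Matrix α α ℂ) (B : Matrix β β ℂ) :
    (tensorLift e A B)ᴴ = tensorLift e Aᴴ Bᴴ := by
  ext x y
  simp [tensorLift]

variable [Fintype ι] [Fintype α]

theorem tensorLift_mul_tensorLift [Fintype β] (e : ι ≃ α × β) (A A' : Matrix α α ℂ)
    (B B' : Matrix β β ℂ) :
    tensorLift e A B * tensorLift e A' B' = tensorLift e (A * A') (B * B') := by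
  rw [tensorLift, tensorLift, submatrix_mul_equiv]
  exact congrArg (fun M => M.submatrix e e) (mul_kronecker_mul A A' B B').symm

variable [Finite β] [DecidableEq β]

theorem block_tensorLift_one_mul (e : ι ≃ α × β) (k k' : β) (A : Matrix α α ℂ)
    (M : Matrix ι ι ℂ) : block e k k' (tensorLift e A 1 * M) = A * block e k k' M := by
  have := Fintype.ofFinite β
  ext i j
  rw [block_apply, mul_apply, mul_apply, ← e.symm.sum_comp, Fintype.sum_prod_type]
  refine Finset.sum_congr rfl fun a _ => ?_
  simp [tensorLift, block_apply, one_apply]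

theorem block_mul_tensorLift_one (e : ι ≃ α × β) (k k' : β) (A : Matrix α α ℂ)
    (M : Matrix ι ι ℂ) : block e k k' (M * tensorLift e A 1) = block e k k' M * A := by
  have := Fintype.ofFinite β
  ext i j
  rw [block_apply, mul_apply, mul_apply, ← e.symm.sum_comp, Fintype.sum_prod_type]
  refine Finset.sum_congr rfl fun a _ => ?_
  simp [tensorLift, block_apply, one_apply]

theorem block_lindbladMap [DecidableEq ι] [DecidableEq α] (e : ι ≃ α × β) (k k' : β)
    (Hm : Matrix α α ℂ) {m : ℕ} (Lk : Fin m → Matrix α α ℂ) (M : Matrix ι ι ℂ) :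
    block e k k' (lindbladMap (tensorLift e Hm 1) (fun q => tensorLift e (Lk q) 1) M) =
      lindbladMap Hm Lk (block e k k' M) := by
  have := Fintype.ofFinite β
  simp only [lindbladMap_apply, map_add, map_smul, map_sub, map_sum, conjTranspose_tensorLift,
    conjTranspose_one, tensorLift_mul_tensorLift, mul_one, block_tensorLift_one_mul,
    block_mul_tensorLift_one]

end TensorLift

section PartialTrace

variable {ι α β : Type*} [Fintype β]

/-- The partial trace over the second factor `β`. -/
def ptrace (e : ι ≃ α × β) (M : Matrix ι ι ℂ) : Matrix α α ℂ := ∑ k, block e k k M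

theorem ptrace_apply (e : ι ≃ α × β) (M : Matrix ι ι ℂ) (i j : α) :
    ptrace e M i j = ∑ k, M (e.symm (i, k)) (e.symm (j, k)) := by
  simp [ptrace, Matrix.sum_apply, block_apply]

theorem posSemidef_ptrace (e : ι ≃ α × β) {M : Matrix ι ι ℂ} (hM : M.PosSemidef) :
    (ptrace e M).PosSemidef :=
  posSemidef_sum _ fun _ _ => hM.submatrix _

variable [Fintype α]

/-- The product `Tr_β M ⊗ Tr_α M` of the two marginals of `M`. -/
def marginalProduct (e : ι ≃ α × β) (M : Matrix ι ι ℂ) : Matrix ι ι ℂ :=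
  tensorLift e (ptrace e M) (ptrace (e.trans (Equiv.prodComm α β)) M)

theorem marginalProduct_trans_prodComm (e : ι ≃ α × β) (M : Matrix ι ι ℂ) :
    marginalProduct (e.trans (Equiv.prodComm α β)) M = marginalProduct e M :=
  tensorLift_trans_prodComm e _ _

theorem block_mulVec_eq_zero (e : ι ≃ α × β) {M : Matrix ι ι ℂ} (hM : M.PosSemidef) {v : α → ℂ}
    (hv : ptrace e M *ᵥ v = 0) (k k' : β) : block e k k' M *ᵥ v = 0 := by
  have := Fintype.ofEquiv _ e.symm
  let B (k : β) : Matrix ι α ℂ := (msqrt M).submatrix id fun i => e.symm (i, k)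
  let C : Matrix (β × ι) α ℂ := Matrix.of fun p => B p.1 p.2
  have hblock (k k' : β) : block e k k' M = (B k)ᴴ * B k' := by
    conv_lhs => rw [← conjTranspose_msqrt_mul_msqrt hM]
    rfl
  have hptrace : ptrace e M = Cᴴ * C := by
    ext i j
    simp only [ptrace, hblock, Matrix.sum_apply, mul_apply, Fintype.sum_prod_type]
    rfl
  have hC : C *ᵥ v = 0 := by rwa [← conjTranspose_mul_self_mulVec_eq_zero, ← hptrace]
  have hB : B k' *ᵥ v = 0 := funext fun x => congrFun hC (k', x)
  rw [hblock, ← mulVec_mulVec, hB, mulVec_zero]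

variable [Fintype ι]

theorem trace_tensorLift (e : ι ≃ α × β) (A : Matrix α α ℂ) (B : Matrix β β ℂ) :
    (tensorLift e A B).trace = A.trace * B.trace :=
  (e.sum_comp fun p => kroneckerMap (· * ·) A B p p).trans (trace_kronecker A B)

theorem trace_ptrace (e : ι ≃ α × β) (M : Matrix ι ι ℂ) : (ptrace e M).trace = M.trace := by
  simp only [trace, diag_apply, ptrace_apply]
  rw [← e.symm.sum_comp, Fintype.sum_prod_type]

theorem isDensity_ptrace (e : ι ≃ α × β) {M : Matrix ι ι ℂ} (hM : IsDensity M) :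
    IsDensity (ptrace e M) :=
  ⟨posSemidef_ptrace e hM.1, by rw [trace_ptrace, hM.2]⟩

theorem isDensity_tensorLift (e : ι ≃ α × β) {A : Matrix α α ℂ} {B : Matrix β β ℂ}
    (hA : IsDensity A) (hB : IsDensity B) : IsDensity (tensorLift e A B) :=
  ⟨(hA.1.kronecker hB.1).submatrix _, by rw [trace_tensorLift, hA.2, hB.2, mul_one]⟩

variable [DecidableEq ι] [DecidableEq β]

theorem lindbladMap_ptrace_eq_zero [DecidableEq α] (e : ι ≃ α × β) {Hm : Matrix α α ℂ} {m : ℕ}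
    {Lk : Fin m → Matrix α α ℂ} {M : Matrix ι ι ℂ}
    (hM : lindbladMap (tensorLift e Hm 1) (fun q => tensorLift e (Lk q) 1) M = 0) :
    lindbladMap Hm Lk (ptrace e M) = 0 := by
  rw [ptrace, map_sum]
  exact Finset.sum_eq_zero fun k _ => by rw [← block_lindbladMap, hM, map_zero]

theorem lindbladMap_marginalProduct_eq_zero (e : ι ≃ α × β) {Hm : Matrix α α ℂ} {m : ℕ}
    {Lk : Fin m → Matrix α α ℂ} {M : Matrix ι ι ℂ}
    (hM : lindbladMap (tensorLift e Hm 1) (fun q => tensorLift e (Lk q) 1) M = 0) :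
    lindbladMap (tensorLift e Hm 1) (fun q => tensorLift e (Lk q) 1) (marginalProduct e M) = 0 := by
  classical
  refine block_ext e fun k k' => ?_
  rw [block_lindbladMap, marginalProduct, block_tensorLift, map_smul,
    lindbladMap_ptrace_eq_zero e hM, smul_zero, map_zero]

end PartialTrace

/-! ### Neighborhood generators -/

section Multipartite

variable {n : ℕ} {d : Fin n → Type*}

section Lift

variable [∀ a, DecidableEq (d a)]

theorem nbhdLift_apply (N : Finset (Fin n)) (A : Matrix (nbhdIdx d N) (nbhdIdx d N) ℂ)
    (x y : ∀ a, d a) : nbhdLift d N A x y =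
      if ∀ a ∉ N, x a = y a then A (fun a => x a) (fun a => y a) else 0 := by
  simp [nbhdLift, splitLift, splitEquiv, one_apply, funext_iff]

theorem exists_nbhdLift_eq_tensorLift {α β : Type*} [DecidableEq β] (e : (∀ a, d a) ≃ α × β)
    {N : Finset (Fin n)} {g : α → nbhdIdx d N} {r : α → α → Prop}
    (hg : ∀ x a, g (e x).1 a = x a)
    (hr : ∀ x y, (∀ a ∉ N, x a = y a) ↔ r (e x).1 (e y).1 ∧ (e x).2 = (e y).2)
    (A : Matrix (nbhdIdx d N) (nbhdIdx d N) ℂ) :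
    ∃ A' : Matrix α α ℂ, nbhdLift d N A = tensorLift e A' 1 := by
  classical
  refine ⟨Matrix.of fun i j => if r i j then A (g i) (g j) else 0, ?_⟩
  ext x y
  have hrestrict (z : ∀ a, d a) : (fun a : {a // a ∈ N} => z a) = g (e z).1 :=
    funext fun a => (hg z a).symm
  simp only [nbhdLift_apply, hr, hrestrict, tensorLift, submatrix_apply, kroneckerMap_apply,
    of_apply, one_apply, mul_ite, mul_one, mul_zero, ← ite_and, and_comm]

theorem exists_nbhdLift_eq_tensorLift_of_subset {N P : Finset (Fin n)} (h : N ⊆ P)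
    (A : Matrix (nbhdIdx d N) (nbhdIdx d N) ℂ) :
    ∃ A', nbhdLift d N A = tensorLift (splitEquiv d P) A' 1 := by
  refine exists_nbhdLift_eq_tensorLift _ (g := fun i a => i ⟨a, h a.2⟩)
    (r := fun i j => ∀ a, a.1 ∉ N → i a = j a) (fun _ _ => rfl) (fun x y => ?_) A
  simp only [splitEquiv, Equiv.piEquivPiSubtypeProd_apply, funext_iff, Subtype.forall]
  refine ⟨fun H => ⟨fun a _ => H a, fun a ha => H a fun hN => ha (h hN)⟩, fun H a ha => ?_⟩
  by_cases haP : a ∈ P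
  exacts [H.1 a haP ha, H.2 a haP]

theorem exists_nbhdLift_eq_tensorLift_of_disjoint {N P : Finset (Fin n)} (h : Disjoint N P)
    (A : Matrix (nbhdIdx d N) (nbhdIdx d N) ℂ) :
    ∃ A', nbhdLift d N A =
      tensorLift ((splitEquiv d P).trans (Equiv.prodComm _ _)) A' 1 := by
  have hNP (a : Fin n) (ha : a ∈ N) : a ∉ P := Finset.disjoint_left.1 h ha
  refine exists_nbhdLift_eq_tensorLift _ (g := fun i a => i ⟨a, hNP a a.2⟩)
    (r := fun i j => ∀ a, a.1 ∉ N → i a = j a) (fun _ _ => rfl) (fun x y => ?_) A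
  simp only [splitEquiv, Equiv.trans_apply, Equiv.prodComm_apply,
    Equiv.piEquivPiSubtypeProd_apply, Prod.fst_swap, Prod.snd_swap, funext_iff, Subtype.forall]
  refine ⟨fun H => ⟨fun a _ => H a, fun a ha => H a fun hN => hNP a hN ha⟩, fun H a ha => ?_⟩
  by_cases haP : a ∈ P
  exacts [H.2 a haP, H.1 a haP ha]

end Lift

variable [∀ a, Fintype (d a)]

theorem nbhdPtrace_eq_ptrace (N : Finset (Fin n)) (ρ : Matrix (∀ a, d a) (∀ a, d a) ℂ) :
    nbhdPtrace d N ρ = ptrace (splitEquiv d N) ρ := by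
  ext i j
  rw [ptrace_apply]
  rfl

variable [∀ a, DecidableEq (d a)]

theorem nbhdPtrace_coLift_mul (N : Finset (Fin n)) (B : Matrix (nbhdCoIdx d N) (nbhdCoIdx d N) ℂ)
    (ρ : Matrix (∀ a, d a) (∀ a, d a) ℂ) :
    nbhdPtrace d N (coLift d N B * ρ) =
      ∑ k, ∑ k', B k k' • block (splitEquiv d N) k' k ρ := by
  ext i j
  simp only [nbhdPtrace, of_apply, Matrix.sum_apply, Matrix.smul_apply, block_apply, smul_eq_mul]
  refine Finset.sum_congr rfl fun k _ => ?_
  rw [mul_apply, ← (splitEquiv d N).symm.sum_comp, Fintype.sum_prod_type_right]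
  refine Finset.sum_congr rfl fun k' _ => ?_
  simp [coLift, splitLift, one_apply]

namespace IsNbhdGen

variable {N : Finset (Fin n)} {ρ : Matrix (∀ a, d a) (∀ a, d a) ℂ}
  {L : Matrix (∀ a, d a) (∀ a, d a) ℂ →ₗ[ℂ] Matrix (∀ a, d a) (∀ a, d a) ℂ}

theorem apply_marginalProduct_eq_zero (hL : IsNbhdGen d N L) {α β : Type*} [Fintype α]
    [Fintype β] [DecidableEq β] {e : (∀ a, d a) ≃ α × β}
    (he : ∀ A, ∃ A', nbhdLift d N A = tensorLift e A' 1) (hρ : L ρ = 0) :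
    L (marginalProduct e ρ) = 0 := by
  obtain ⟨Hm, -, m, Lk, rfl⟩ := hL
  choose lift hlift using he
  simp only [hlift] at hρ ⊢
  exact lindbladMap_marginalProduct_eq_zero e hρ

theorem eq_zero_of_Fdist_eq_top (hL : IsNbhdGen d N L) (hρ : ρ.PosSemidef) (hinv : L ρ = 0)
    (hF : Fdist (nbhdPtrace d N ρ) (nbhdSchmidt d N ρ) = ⊤) : L = 0 := by
  obtain ⟨Hm, hH, m, Lk, rfl⟩ := hL
  have hblock (k k') : lindbladMap Hm Lk (block (splitEquiv d N) k k' ρ) = 0 := by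
    rw [← block_lindbladMap]
    exact (congrArg _ hinv).trans (map_zero _)
  have hN : (nbhdPtrace d N ρ).PosDef := by
    refine posDef_of_Fdist_eq_top ?_ ?_ hF <;> rw [nbhdPtrace_eq_ptrace]
    · exact posSemidef_ptrace _ hρ
    rintro _ ⟨B, rfl⟩ v hv
    have hv' := block_mulVec_eq_zero _ hρ hv
    rw [nbhdPtrace_coLift_mul]
    simp [conjTranspose_sum, conjTranspose_block, sum_mulVec, smul_mulVec, hρ.isHermitian.eq, hv']
  have hgen : lindbladMap Hm Lk = 0 := by
    refine lindbladMap_eq_zero_of_Fdist_eq_top hH hN ?_ ?_ hF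
    · rw [nbhdPtrace_eq_ptrace]
      exact lindbladMap_ptrace_eq_zero _ hinv
    · rintro _ ⟨B, rfl⟩
      simp only [nbhdPtrace_coLift_mul, map_sum, map_smul, hblock, smul_zero,
        Finset.sum_const_zero]
  refine LinearMap.ext fun M => block_ext (splitEquiv d N) fun k k' => ?_
  rw [LinearMap.zero_apply, map_zero]
  exact (block_lindbladMap _ k k' Hm Lk M).trans (by rw [hgen, LinearMap.zero_apply])

end IsNbhdGen

end Multipartite

theorem IsGAS.eq_of_isDensity {ι : Type*} [Fintype ι]
    {L : Matrix ι ι ℂ →ₗ[ℂ] Matrix ι ι ℂ} {ρ σ : Matrix ι ι ℂ} (hL : IsGAS L ρ)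
    (hσ : IsDensity σ) (hσ0 : L σ = 0) : σ = ρ := by
  have hderiv (t : ℝ) (i j : ι) : HasDerivAt (fun _ : ℝ => σ i j) (L σ i j) t := by
    rw [hσ0]
    exact hasDerivAt_const t (σ i j)
  ext i j
  exact tendsto_nhds_unique tendsto_const_nhds (hL.2 σ hσ (fun _ => σ) rfl hderiv i j)

theorem chain_subset_or_disjoint_of_ne {m : ℕ} {j l : Fin m} (h : j ≠ l) :
    ({j.castSucc, j.succ} : Finset (Fin (m + 1))) ⊆ Finset.univ.filter (· ≤ l.castSucc) ∨
      Disjoint ({j.castSucc, j.succ} : Finset (Fin (m + 1)))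
        (Finset.univ.filter (· ≤ l.castSucc)) := by
  simp only [Finset.insert_subset_iff, Finset.singleton_subset_iff, Finset.disjoint_insert_left,
    Finset.disjoint_singleton_left, Finset.mem_filter_univ, Fin.castSucc_le_castSucc_iff,
    Fin.succ_le_castSucc_iff]
  omega

theorem stmt15_general {n M : ℕ} {d : Fin n → Type*} [∀ a, Fintype (d a)]
    [∀ a, DecidableEq (d a)] {Nb : Fin M → Finset (Fin n)}
    {ρ : Matrix (∀ a, d a) (∀ a, d a) ℂ} (hρ : IsDensity ρ) (hffqls : IsFFQLS d Nb ρ)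
    (P : Finset (Fin n))
    (hNb : ∀ j, Nb j ⊆ P ∨ Disjoint (Nb j) P ∨
      Fdist (nbhdPtrace d (Nb j) ρ) (nbhdSchmidt d (Nb j) ρ) = ⊤) :
    ∃ ρL ρR, IsDensity ρL ∧ IsDensity ρR ∧ ρ = splitLift d P ρL ρR := by
  obtain ⟨L, hgen, hff, hgas⟩ := hffqls
  have hinv := hff ρ hρ hgas.1
  let e := splitEquiv d P
  have hL := isDensity_ptrace e hρ
  have hR := isDensity_ptrace (e.trans (Equiv.prodComm _ _)) hρ
  have hkill (j : Fin M) : L j (marginalProduct e ρ) = 0 := by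
    rcases hNb j with hsub | hdisj | hfull
    · exact (hgen j).apply_marginalProduct_eq_zero
        (exists_nbhdLift_eq_tensorLift_of_subset hsub) (hinv j)
    · rw [← marginalProduct_trans_prodComm]
      exact (hgen j).apply_marginalProduct_eq_zero
        (exists_nbhdLift_eq_tensorLift_of_disjoint hdisj) (hinv j)
    · rw [(hgen j).eq_zero_of_Fdist_eq_top hρ.1 (hinv j) hfull, LinearMap.zero_apply]
  have hsum : (∑ j, L j) (marginalProduct e ρ) = 0 := by
    rw [LinearMap.sum_apply]
    exact Finset.sum_eq_zero fun j _ => hkill j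
  exact ⟨_, _, hL, hR, (hgas.eq_of_isDensity (isDensity_tensorLift e hL hR) hsum).symm⟩

/-! ### Statement 15 -/

theorem stmt15
    {m : ℕ} {d : Fin (m + 1) → Type*} [∀ a, Fintype (d a)] [∀ a, DecidableEq (d a)]
    (ρ : Matrix (∀ a, d a) (∀ a, d a) ℂ) (hρ : ρ.PosDef) (hρtr : ρ.trace = 1)
    (hffqls : IsFFQLS d
      (fun j : Fin m => ({j.castSucc, j.succ} : Finset (Fin (m + 1)))) ρ)
    (l : Fin m)
    (hfull : Fdist (nbhdPtrace d ({l.castSucc, l.succ} : Finset (Fin (m + 1))) ρ)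
        (nbhdSchmidt d ({l.castSucc, l.succ} : Finset (Fin (m + 1))) ρ) = ⊤) :
    ∃ (ρL : Matrix (nbhdIdx d (Finset.univ.filter fun a => a ≤ l.castSucc))
        (nbhdIdx d (Finset.univ.filter fun a => a ≤ l.castSucc)) ℂ)
      (ρR : Matrix (nbhdCoIdx d (Finset.univ.filter fun a => a ≤ l.castSucc))
        (nbhdCoIdx d (Finset.univ.filter fun a => a ≤ l.castSucc)) ℂ),
      IsDensity ρL ∧ IsDensity ρR ∧
        ρ = splitLift d (Finset.univ.filter fun a => a ≤ l.castSucc) ρL ρR := by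
  refine stmt15_general ⟨hρ.posSemidef, hρtr⟩ hffqls _ fun j => ?_
  obtain rfl | hj := eq_or_ne j l
  exacts [.inr (.inr hfull), (chain_subset_or_disjoint_of_ne hj).imp_right .inl]

end QDS
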